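/- arXiv:2009.09862 — 2 statements merged into one kernel-verified Lean document; each statement's English description precedes it below -/
import Mathlib

section
/- Let f be a continuous real-valued function on the space of subsegments [a,b] ⊆ [0,1] (with a ≤ b) such that f([a,a]) = 0 for all a ∈ [0,1]. Then for every positive integer m there exist points 0 = x₀ ≤ x₁ ≤ ⋯ ≤ x_{m-1} ≤ x_m = 1 such that f([x₀,x₁]) = f([x₁,x₂]) = ⋯ = f([x_{m-1},x_m]). -/
open Set

/-! The number of parts `m` is treated one prime factor at a time. To make this possible, the graph of
`f` is replaced by a more general object: a pair of closed sets `A`, `B` covering the prism of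
triples `(a, b, t)`, with `A` containing the bottom `t = 0` and missing the top `t = 1` (`Sep`),
whose wall `A ∩ B` is thought of as the graph of a multivalued function of the segment `[a, b]`.
The vanishing of `f` on degenerate segments becomes the condition that on the diagonal `a = b`
membership depends on `t` only. The statement proved by induction, `Divides m`, is that `[0, 1]`
splits into `m` segments that all lie in the wall at a common `t`. For `f` itself, `A` and `B` are
given by `lev t ≤ f` and `f ≤ lev t`, where the level `lev t` sweeps across the range of `f`.

*Prime `m = p`* (`divides_prime`). Let `U t` be the upper triangular matrix over `ZMod p` whose
entries are the indicators of `A` at the grid segments and grid time `t`, and let `δ` be the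
difference matrix, inverse to the upper triangular matrix of ones. With the scalar `c = c t` equal
to the diagonal value of `U t`, the matrix
`E t = ∑ₖ (U (t+1) δ - c)ᵏ (U (t+1) - U t) (δ U t - c)ᵖ⁻¹⁻ᵏ` satisfies
`δ E t = (δ U (t+1) - c)ᵖ - (δ U t - c)ᵖ = (δ U (t+1))ᵖ - (δ U t)ᵖ`, because `c` is a scalar and
the characteristic is `p`. Summed over `t` this telescopes to `-1`, since `δ U` runs from `1` to
`0`; so some `E t` has a nonzero entry in the corner `(0, N)`. Expanding the matrix products gives
a chain of `p` grid segments from `0` to `1`. Each factor is a difference of neighbouring values of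
the indicator of `A`, so each segment of the chain is within the mesh of both `A` and `B`.
A compactness argument finishes this case. (The corner entry of `∑ E t` is a combinatorial
mapping degree, and the identity says that it is `-1` modulo `p`.)

*Products* (`divides_mul`). If `Divides n` holds, then the segments with a time that split into `n`
parts in the wall form a closed set, and no path from the bottom to the top of the prism avoids it
(`path_meets`). Hence this set contains the wall of a new separating pair (`exists_sep`), and
`Divides m` applied to the new pair gives `Divides (m * n)`.
-/

namespace Equipart

/-! ### Chains of steps of a relation -/

/-- `Ch R n a b`: there is a chain of `n` consecutive `R`-steps leading from `a` to `b`. -/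
def Ch {α : Type*} (R : α → α → Prop) : ℕ → α → α → Prop
  | 0, a, b => a = b
  | n + 1, a, b => ∃ c, R a c ∧ Ch R n c b

theorem Ch.map {α β : Type*} {R : α → α → Prop} {R' : β → β → Prop} (g : α → β)
    (h : ∀ a b, R a b → R' (g a) (g b)) :
    ∀ {n : ℕ} {a b : α}, Ch R n a b → Ch R' n (g a) (g b)
  | 0, _, _, e => congrArg g e
  | _ + 1, _, _, ⟨c, h1, h2⟩ => ⟨g c, h _ _ h1, Ch.map g h h2⟩

theorem Ch.trans {α : Type*} {R : α → α → Prop} {k : ℕ} :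
    ∀ {n : ℕ} {a b c : α}, Ch R n a b → Ch R k b c → Ch R (n + k) a c
  | 0, a, b, c, e, h => by
      have e' : a = b := e
      subst e'
      simpa using h
  | n + 1, a, b, c, ⟨d, h1, h2⟩, h => by
      have : n + 1 + k = (n + k) + 1 := by omega
      rw [this]
      exact ⟨d, h1, Ch.trans h2 h⟩

theorem Ch.mul {α : Type*} {R R' : α → α → Prop} {k : ℕ}
    (h : ∀ a b, R' a b → Ch R k a b) :
    ∀ {n : ℕ} {a b : α}, Ch R' n a b → Ch R (n * k) a b
  | 0, a, b, e => by
      have e' : a = b := e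
      subst e'
      simp [Ch]
  | n + 1, a, b, ⟨d, h1, h2⟩ => by
      have : (n + 1) * k = k + n * k := by ring
      rw [this]
      exact (h _ _ h1).trans (Ch.mul h h2)

/-- A chain as a sequence of points, constant after its last point. -/
theorem Ch.seq {α : Type*} {R : α → α → Prop} :
    ∀ {n : ℕ} {a b : α}, Ch R n a b →
      ∃ x : ℕ → α, x 0 = a ∧ x n = b ∧ (∀ i < n, R (x i) (x (i + 1))) ∧ ∀ i, n ≤ i → x i = b
  | 0, a, b, e => ⟨fun _ => b, e.symm, rfl, by simp, by simp⟩
  | n + 1, a, b, ⟨c, h1, h2⟩ => by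
      obtain ⟨x, x0, xn, hx, hx'⟩ := Ch.seq h2
      refine ⟨fun i => Nat.casesOn i a x, rfl, xn, ?_, ?_⟩
      · rintro (_ | i) hi
        · simpa [x0] using h1
        · exact hx i (by omega)
      · rintro (_ | i) hi
        · omega
        · exact hx' i (by omega)

theorem Ch.of_seq {α : Type*} {R : α → α → Prop} :
    ∀ {n : ℕ} (x : ℕ → α), (∀ i < n, R (x i) (x (i + 1))) → Ch R n (x 0) (x n)
  | 0, _, _ => rfl
  | n + 1, x, h => ⟨x 1, h 0 (by omega), Ch.of_seq (fun i => x (i + 1))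
      (fun i hi => h (i + 1) (by omega))⟩

/-! ### The algebraic identity modulo a prime -/

section Discrete

variable {N : ℕ} {K : Type*} [CommRing K]

/-- The upper shift matrix. -/
def sh (N : ℕ) (K : Type*) [CommRing K] : Matrix (Fin (N + 1)) (Fin (N + 1)) K :=
  fun i j => if (i : ℕ) + 1 = j then 1 else 0

/-- The difference matrix: the entries of `M * dl` and `dl * M` are the differences of
`M` in the second and in the first index, up to sign and with zero values outside the matrix. -/
def dl (N : ℕ) (K : Type*) [CommRing K] : Matrix (Fin (N + 1)) (Fin (N + 1)) K := 1 - sh N K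

/-- The upper triangular matrix of ones, inverse to `dl`. -/
def up (N : ℕ) (K : Type*) [CommRing K] : Matrix (Fin (N + 1)) (Fin (N + 1)) K :=
  fun i j => if i ≤ j then 1 else 0

theorem mul_dl_zero (M : Matrix (Fin (N + 1)) (Fin (N + 1)) K) (i) :
    (M * dl N K) i 0 = M i 0 := by
  rw [dl, mul_sub, mul_one, Matrix.sub_apply, Matrix.mul_apply]
  simp [sh]

theorem mul_dl_succ (M : Matrix (Fin (N + 1)) (Fin (N + 1)) K) (i) (k : Fin N) :
    (M * dl N K) i k.succ = M i k.succ - M i k.castSucc := by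
  have : ∀ l : Fin (N + 1), ((l : ℕ) + 1 = k.succ) ↔ l = k.castSucc := by
    intro l; simp [Fin.ext_iff]
  rw [dl, mul_sub, mul_one, Matrix.sub_apply, Matrix.mul_apply]
  simp only [sh, this]
  simp

theorem dl_mul_last (M : Matrix (Fin (N + 1)) (Fin (N + 1)) K) (j) :
    (dl N K * M) (Fin.last N) j = M (Fin.last N) j := by
  have : ∀ l : Fin (N + 1), ¬ (((Fin.last N : Fin (N + 1)) : ℕ) + 1 = l) := by
    intro l; have := l.2; simp; omega
  rw [dl, sub_mul, one_mul, Matrix.sub_apply, Matrix.mul_apply]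
  simp only [sh, this]
  simp

theorem dl_mul_castSucc (M : Matrix (Fin (N + 1)) (Fin (N + 1)) K) (k : Fin N) (j) :
    (dl N K * M) k.castSucc j = M k.castSucc j - M k.succ j := by
  have : ∀ l : Fin (N + 1), (((k.castSucc : Fin (N + 1)) : ℕ) + 1 = l) ↔ k.succ = l := by
    intro l; simp [Fin.ext_iff]
  rw [dl, sub_mul, one_mul, Matrix.sub_apply, Matrix.mul_apply]
  simp only [sh, this]
  simp

theorem dl_mul_up : dl N K * up N K = 1 := by
  ext i j
  induction i using Fin.lastCases with
  | last =>
    rw [dl_mul_last, Matrix.one_apply]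
    simp only [up, Fin.last_le_iff, eq_comm]
  | cast k =>
    rw [dl_mul_castSucc, Matrix.one_apply]
    simp only [up, Fin.le_def, Fin.ext_iff, Fin.val_castSucc, Fin.val_succ]
    split_ifs <;> first | omega | simp

/-- The sum `∑ (V δ - c)ᵏ (V - U) (δ U - c)ⁿ⁻¹⁻ᵏ`, the increment of the degree
between two consecutive times, written recursively. -/
def inc (U V : Matrix (Fin (N + 1)) (Fin (N + 1)) K) (c : K) :
    ℕ → Matrix (Fin (N + 1)) (Fin (N + 1)) K
  | 0 => 0
  | n + 1 => (V * dl N K - c • 1) * inc U V c n + (V - U) * (dl N K * U - c • 1) ^ n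

theorem dl_mul_inc (U V : Matrix (Fin (N + 1)) (Fin (N + 1)) K) (c : K) (n : ℕ) :
    dl N K * inc U V c n = (dl N K * V - c • 1) ^ n - (dl N K * U - c • 1) ^ n := by
  induction n with
  | zero => simp [inc]
  | succ n ih =>
    have h1 : dl N K * (V * dl N K - c • 1) = (dl N K * V - c • 1) * dl N K := by
      simp [mul_sub, sub_mul, mul_assoc]
    have h2 : dl N K * (V - U) = (dl N K * V - c • 1) - (dl N K * U - c • 1) := by
      simp [mul_sub]
    rw [inc, mul_add, ← mul_assoc, ← mul_assoc, h1, h2, mul_assoc, ih, pow_succ', pow_succ']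
    generalize dl N K * V - c • 1 = P
    generalize dl N K * U - c • 1 = S
    rw [mul_sub, sub_mul]
    abel

theorem exists_ne_of_mul {A B : Matrix (Fin (N + 1)) (Fin (N + 1)) K} {i j : Fin (N + 1)}
    (h : (A * B) i j ≠ 0) : ∃ k, A i k ≠ 0 ∧ B k j ≠ 0 := by
  rw [Matrix.mul_apply] at h
  obtain ⟨k, -, hk⟩ := Finset.exists_ne_zero_of_sum_ne_zero h
  exact ⟨k, left_ne_zero_of_mul hk, right_ne_zero_of_mul hk⟩

theorem ch_of_pow {A : Matrix (Fin (N + 1)) (Fin (N + 1)) K}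
    {R : Fin (N + 1) → Fin (N + 1) → Prop} (hR : ∀ i j, A i j ≠ 0 → R i j) :
    ∀ {n : ℕ} {i j : Fin (N + 1)}, (A ^ n) i j ≠ 0 → Ch R n i j
  | 0, i, j, h => by
      by_contra hij
      exact h (by simpa using Matrix.one_apply_ne hij)
  | n + 1, i, j, h => by
      rw [pow_succ'] at h
      obtain ⟨k, h1, h2⟩ := exists_ne_of_mul h
      exact ⟨k, hR _ _ h1, ch_of_pow hR h2⟩

theorem ch_of_inc {U V : Matrix (Fin (N + 1)) (Fin (N + 1)) K} {c : K}
    {R : Fin (N + 1) → Fin (N + 1) → Prop}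
    (h1 : ∀ i j, (V * dl N K - c • 1) i j ≠ 0 → R i j)
    (h2 : ∀ i j, (V - U) i j ≠ 0 → R i j)
    (h3 : ∀ i j, (dl N K * U - c • 1) i j ≠ 0 → R i j) :
    ∀ {n : ℕ} {i j : Fin (N + 1)}, inc U V c n i j ≠ 0 → Ch R n i j
  | 0, i, j, h => absurd rfl h
  | n + 1, i, j, h => by
      rw [inc, Matrix.add_apply] at h
      by_cases hz : ((V * dl N K - c • 1) * inc U V c n) i j = 0
      · rw [hz, zero_add] at h
        obtain ⟨k, ha, hb⟩ := exists_ne_of_mul h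
        exact ⟨k, h2 _ _ ha, ch_of_pow h3 hb⟩
      · obtain ⟨k, ha, hb⟩ := exists_ne_of_mul hz
        exact ⟨k, h1 _ _ ha, ch_of_inc h1 h2 h3 hb⟩

/-- Mapping degree modulo `p`. If the family `U 0, …, U T` runs from the matrix `up` to `0`, then
for some `t` the increment has a nonzero corner entry: in characteristic `p` one has `(Z - c)ᵖ = Zᵖ - cᵖ`, so the
identity `dl_mul_inc` telescopes over `t` to `dl * ∑ inc = -1`, whatever the scalars `c t` are. -/
theorem exists_inc_ne_zero (p : ℕ) [Fact p.Prime] (T : ℕ)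
    (U : ℕ → Matrix (Fin (N + 1)) (Fin (N + 1)) (ZMod p)) (c : ℕ → ZMod p)
    (h0 : U 0 = up N (ZMod p)) (hT : U T = 0) :
    ∃ t < T, inc (U t) (U (t + 1)) (c t) p 0 (Fin.last N) ≠ 0 := by
  by_contra! hcon
  have hp : p ≠ 0 := (Fact.out : p.Prime).ne_zero
  have key : dl N (ZMod p) * ∑ t ∈ Finset.range T, inc (U t) (U (t + 1)) (c t) p = -1 := by
    rw [Finset.mul_sum]
    have : ∀ t ∈ Finset.range T, dl N (ZMod p) * inc (U t) (U (t + 1)) (c t) p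
        = (dl N (ZMod p) * U (t + 1)) ^ p - (dl N (ZMod p) * U t) ^ p := by
      intro t _
      have hc : ∀ M : Matrix (Fin (N + 1)) (Fin (N + 1)) (ZMod p),
          Commute M (c t • (1 : Matrix (Fin (N + 1)) (Fin (N + 1)) (ZMod p))) :=
        fun M => (Commute.one_right M).smul_right _
      rw [dl_mul_inc, sub_pow_char_of_commute p (hc _), sub_pow_char_of_commute p (hc _)]
      abel
    rw [Finset.sum_congr rfl this, Finset.sum_range_sub (fun t => (dl N (ZMod p) * U t) ^ p),
      hT, h0, dl_mul_up]
    simp [hp]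
  have h2 : ∑ t ∈ Finset.range T, inc (U t) (U (t + 1)) (c t) p = - up N (ZMod p) := by
    have := congrArg (fun M => up N (ZMod p) * M) key
    have hud : up N (ZMod p) * dl N (ZMod p) = 1 := mul_eq_one_comm.1 dl_mul_up
    simpa [← mul_assoc, hud] using this
  have h3 := congrFun (congrFun h2 0) (Fin.last N)
  rw [Matrix.sum_apply, Finset.sum_eq_zero (fun t ht => hcon t (Finset.mem_range.1 ht))] at h3
  simp [up] at h3

end Discrete

/-! ### Separating pairs of closed sets -/

/-- The prism of triples `(a, b, t)` with `[a, b] ⊆ [0, 1]` a segment and `t ∈ [0, 1]` a time. -/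
def Prism : Set (ℝ × ℝ × ℝ) := {q | 0 ≤ q.1 ∧ q.1 ≤ q.2.1 ∧ q.2.1 ≤ 1 ∧ 0 ≤ q.2.2 ∧ q.2.2 ≤ 1}

/-- Closed sets `A`, `B` covering the prism, such that `A` contains the bottom `t = 0` and misses
the top `t = 1`, and such that membership of a degenerate segment `[a, a]` at time `t`
depends on `t` only. The wall `A ∩ B` plays the role of the graph of a multivalued function of
a segment. -/
structure Sep (A B : Set (ℝ × ℝ × ℝ)) : Prop where
  closedA : IsClosed A
  closedB : IsClosed B
  subA : A ⊆ Prism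
  subB : B ⊆ Prism
  cover : ∀ q ∈ Prism, q ∈ A ∨ q ∈ B
  bot : ∀ q ∈ Prism, q.2.2 = 0 → q ∈ A
  top : ∀ q ∈ Prism, q.2.2 = 1 → q ∉ A
  diagA : ∀ a t, 0 ≤ a → a ≤ 1 → 0 ≤ t → t ≤ 1 → ((a, a, t) ∈ A ↔ (0, 0, t) ∈ A)
  diagB : ∀ a t, 0 ≤ a → a ≤ 1 → 0 ≤ t → t ≤ 1 → ((a, a, t) ∈ B ↔ (0, 0, t) ∈ B)

/-- The relation between the endpoints of the segments lying in `S` at time `t`. -/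
def stp (S : Set (ℝ × ℝ × ℝ)) (t a b : ℝ) : Prop := (a, b, t) ∈ S

/-- The segments, with a time, that split into `n` consecutive segments lying in `S`
at that time. -/
def Split (S : Set (ℝ × ℝ × ℝ)) (n : ℕ) : Set (ℝ × ℝ × ℝ) :=
  {q | Ch (stp S q.2.2) n q.1 q.2.1}

/-- `[0, 1]` can be divided, for every separating pair, into `m` segments that lie in its wall
at a common time. -/
def Divides (m : ℕ) : Prop :=
  ∀ A B, Sep A B → ∃ t, 0 ≤ t ∧ t ≤ 1 ∧ Ch (stp (A ∩ B) t) m 0 1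

theorem isClosed_prism : IsClosed Prism := by
  unfold Prism
  simp only [Set.ofPred_and]
  refine IsClosed.inter ?_ (IsClosed.inter ?_ (IsClosed.inter ?_ (IsClosed.inter ?_ ?_))) <;>
    exact isClosed_le (by fun_prop) (by fun_prop)

theorem convex_prism : Convex ℝ Prism := by
  rintro ⟨a, b, t⟩ ⟨h1, h2, h3, h4, h5⟩ ⟨a', b', t'⟩ ⟨h1', h2', h3', h4', h5'⟩ u v hu hv huv
  simp only at *
  refine ⟨?_, ?_, ?_, ?_, ?_⟩ <;> simp only [Prod.smul_mk, Prod.mk_add_mk, smul_eq_mul]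
  · positivity
  · gcongr
  · nlinarith
  · positivity
  · nlinarith

/-! ### Prime numbers of parts -/

open Classical in
/-- The indicator matrix of `A` on the grid of mesh `1 / N` at time `t / N`. -/
noncomputable def gridMat (A : Set (ℝ × ℝ × ℝ)) (N : ℕ) (K : Type*) [CommRing K] (t : ℕ) :
    Matrix (Fin (N + 1)) (Fin (N + 1)) K :=
  fun i j => if i ≤ j ∧ ((i : ℝ) / N, (j : ℝ) / N, (t : ℝ) / N) ∈ A then 1 else 0

theorem grid_mem {N : ℕ} {i j : ℕ} (hij : i ≤ j) (hj : j ≤ N) {t : ℕ} (ht : t ≤ N) :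
    ((i : ℝ) / N, (j : ℝ) / N, (t : ℝ) / N) ∈ Prism := by
  refine ⟨by positivity, ?_, ?_, by positivity, ?_⟩ <;> simp only
  · gcongr
  · exact div_le_one_of_le₀ (by exact_mod_cast hj) (by positivity)
  · exact div_le_one_of_le₀ (by exact_mod_cast ht) (by positivity)

/-- The points of the prism that are `ε`-close to both `A` and `B`. -/
def Near (A B : Set (ℝ × ℝ × ℝ)) (ε : ℝ) : Set (ℝ × ℝ × ℝ) :=
  Prism ∩ (Metric.cthickening ε A ∩ Metric.cthickening ε B)

theorem near_of_ne {A B : Set (ℝ × ℝ × ℝ)} (h : Sep A B) {ε : ℝ} {q r s : ℝ × ℝ × ℝ}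
    (hq : q ∈ Prism) (hr : r ∈ Prism) (hs : s ∈ Prism) (hqr : dist q r ≤ ε) (hqs : dist q s ≤ ε)
    (hne : ¬ (r ∈ A ↔ s ∈ A)) : q ∈ Near A B ε := by
  refine ⟨hq, ?_⟩
  by_cases hrA : r ∈ A
  · have hsA : s ∉ A := by tauto
    exact ⟨Metric.mem_cthickening_of_dist_le q r ε A hrA hqr,
      Metric.mem_cthickening_of_dist_le q s ε B ((h.cover s hs).resolve_left hsA) hqs⟩
  · have hsA : s ∈ A := by tauto
    exact ⟨Metric.mem_cthickening_of_dist_le q s ε A hsA hqs,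
      Metric.mem_cthickening_of_dist_le q r ε B ((h.cover r hr).resolve_left hrA) hqr⟩

theorem dist_grid {N : ℕ} {a b : ℕ} (h1 : a ≤ b + 1) (h2 : b ≤ a + 1) :
    dist ((a : ℝ) / N) ((b : ℝ) / N) ≤ 1 / N := by
  rw [Real.dist_eq, ← sub_div, abs_div, Nat.abs_cast]
  gcongr
  rw [abs_le]
  constructor
  · have : (b : ℝ) ≤ a + 1 := by exact_mod_cast h2
    linarith
  · have : (a : ℝ) ≤ b + 1 := by exact_mod_cast h1
    linarith

theorem dist_grid3 {N : ℕ} {i j t i' j' t' : ℕ} (h1 : i ≤ i' + 1) (h2 : i' ≤ i + 1)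
    (h3 : j ≤ j' + 1) (h4 : j' ≤ j + 1) (h5 : t ≤ t' + 1) (h6 : t' ≤ t + 1) :
    dist (((i : ℝ) / N, (j : ℝ) / N, (t : ℝ) / N) : ℝ × ℝ × ℝ)
      ((i' : ℝ) / N, (j' : ℝ) / N, (t' : ℝ) / N) ≤ 1 / N := by
  rw [Prod.dist_eq, Prod.dist_eq]
  exact max_le (dist_grid h1 h2) (max_le (dist_grid h3 h4) (dist_grid h5 h6))

section

variable {A B : Set (ℝ × ℝ × ℝ)} {N : ℕ} {K : Type*} [CommRing K]

/-- A grid segment is near the wall if the entries of two neighbouring grid segments, at the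
current or the next time, differ. -/
theorem near_grid (h : Sep A B) {t : ℕ} (ht : t < N) {i j i' j' i'' j'' : Fin (N + 1)}
    {t' t'' : ℕ} (hij : i ≤ j) (hij' : i' ≤ j') (hij'' : i'' ≤ j'')
    (h1 : (i : ℕ) ≤ i' + 1 ∧ (i' : ℕ) ≤ i + 1 ∧ (j : ℕ) ≤ j' + 1 ∧ (j' : ℕ) ≤ j + 1)
    (h2 : (i : ℕ) ≤ i'' + 1 ∧ (i'' : ℕ) ≤ i + 1 ∧ (j : ℕ) ≤ j'' + 1 ∧ (j'' : ℕ) ≤ j + 1)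
    (h3 : t ≤ t' ∧ t' ≤ t + 1) (h4 : t ≤ t'' ∧ t'' ≤ t + 1)
    (hne : gridMat A N K t' i' j' ≠ gridMat A N K t'' i'' j'') :
    stp (Near A B (1 / N)) ((t : ℝ) / N) ((i : ℝ) / N) ((j : ℝ) / N) := by
  have g : ∀ {i j : Fin (N + 1)} {t : ℕ}, i ≤ j → t ≤ N →
      ((i : ℝ) / N, (j : ℝ) / N, (t : ℝ) / N) ∈ Prism := fun {i j t} hh htt =>
    grid_mem (by exact_mod_cast hh) (by omega) htt
  refine near_of_ne h (g hij (by omega)) (g (t := t') hij' (by omega))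
    (g (t := t'') hij'' (by omega))
    (dist_grid3 (by omega) (by omega) (by omega) (by omega) (by omega) (by omega))
    (dist_grid3 (by omega) (by omega) (by omega) (by omega) (by omega) (by omega)) ?_
  intro hiff
  apply hne
  unfold gridMat
  by_cases hA : ((i' : ℝ) / N, (j' : ℝ) / N, (t' : ℝ) / N) ∈ A
  · rw [if_pos ⟨hij', hA⟩, if_pos ⟨hij'', hiff.1 hA⟩]
  · rw [if_neg fun hh => hA hh.2, if_neg fun hh => hA (hiff.2 hh.2)]

theorem gridMat_of_lt (t : ℕ) {i j : Fin (N + 1)} (hij : j < i) : gridMat A N K t i j = 0 := by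
  simp [gridMat, not_le.2 hij]

theorem gridMat_diag (h : Sep A B) {t : ℕ} (ht : t ≤ N) (i : Fin (N + 1)) :
    gridMat A N K t i i = gridMat A N K t 0 0 := by
  obtain ⟨h1, h2, h3, h4, h5⟩ := grid_mem (N := N) (le_refl (i : ℕ)) (by omega) ht
  have := h.diagA ((i : ℝ) / N) ((t : ℝ) / N) h1 h3 h4 h5
  have e : (((0 : Fin (N + 1)) : ℕ) : ℝ) / N = 0 := by simp
  unfold gridMat
  rw [e]
  by_cases hA : ((i : ℝ) / N, (i : ℝ) / N, (t : ℝ) / N) ∈ A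
  · rw [if_pos ⟨le_rfl, hA⟩, if_pos ⟨le_rfl, this.1 hA⟩]
  · rw [if_neg fun hh => hA hh.2, if_neg fun hh => hA (this.2 hh.2)]

theorem smul_one_of_ne (c : K) {i j : Fin (N + 1)} (hij : i ≠ j) :
    (c • (1 : Matrix (Fin (N + 1)) (Fin (N + 1)) K)) i j = 0 := by
  simp [Matrix.one_apply_ne hij]

theorem smul_one_diag (c : K) (i : Fin (N + 1)) :
    (c • (1 : Matrix (Fin (N + 1)) (Fin (N + 1)) K)) i i = c := by
  simp

/-- The factors `U (t+1) δ - c` in the identity detect segments near the wall. Below the diagonal the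
entries vanish; on it, subtracting the degenerate value at time `t` leaves a difference in time. -/
theorem near_of_right (h : Sep A B) {t : ℕ} (ht : t < N) (i j : Fin (N + 1))
    (hne : (gridMat A N K (t + 1) * dl N K - gridMat A N K t 0 0 • 1) i j ≠ 0) :
    stp (Near A B (1 / N)) ((t : ℝ) / N) ((i : ℝ) / N) ((j : ℝ) / N) := by
  rw [Matrix.sub_apply] at hne
  -- on the diagonal both terms are values at degenerate segments, one time step apart
  have hdiag : ∀ i : Fin (N + 1), gridMat A N K (t + 1) i i - gridMat A N K t 0 0 ≠ 0 →
      stp (Near A B (1 / N)) ((t : ℝ) / N) ((i : ℝ) / N) ((i : ℝ) / N) := by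
    intro i hi
    rw [← gridMat_diag h ht.le i] at hi
    exact near_grid h ht le_rfl le_rfl le_rfl (by omega) (by omega) (by omega) (by omega)
      (sub_ne_zero.1 hi)
  induction j using Fin.cases with
  | zero =>
    rw [mul_dl_zero] at hne
    rcases eq_or_ne i 0 with rfl | hi
    · rw [smul_one_diag] at hne
      exact hdiag 0 hne
    · rw [smul_one_of_ne _ hi, gridMat_of_lt _ (Fin.pos_iff_ne_zero.2 hi)] at hne
      simp at hne
  | succ k =>
    rw [mul_dl_succ] at hne
    rcases lt_trichotomy i k.succ with hi | hi | hi
    · rw [smul_one_of_ne _ hi.ne, sub_zero] at hne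
      have hi' : i ≤ k.castSucc := by
        simp only [Fin.lt_def, Fin.le_def, Fin.val_succ, Fin.val_castSucc] at *; omega
      exact near_grid h ht hi.le hi.le hi' (by omega) (by simp; omega) (by omega) (by omega)
        (sub_ne_zero.1 hne)
    · rw [hi, smul_one_diag, gridMat_of_lt _ (Fin.castSucc_lt_succ), sub_zero] at hne
      rw [hi]
      exact hdiag _ hne
    · have hi' : k.castSucc < i := Fin.castSucc_lt_succ.trans hi
      rw [smul_one_of_ne _ hi.ne', gridMat_of_lt _ hi, gridMat_of_lt _ hi'] at hne
      simp at hne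

/-- The factors `δ U t - c` in the identity detect segments near the wall; their entries on and
below the diagonal vanish. -/
theorem near_of_left (h : Sep A B) {t : ℕ} (ht : t < N) (i j : Fin (N + 1))
    (hne : (dl N K * gridMat A N K t - gridMat A N K t 0 0 • 1) i j ≠ 0) :
    stp (Near A B (1 / N)) ((t : ℝ) / N) ((i : ℝ) / N) ((j : ℝ) / N) := by
  rw [Matrix.sub_apply] at hne
  have hdiag : ∀ i : Fin (N + 1), gridMat A N K t i i - gridMat A N K t 0 0 = 0 := by
    intro i
    rw [gridMat_diag h ht.le i, sub_self]
  induction i using Fin.lastCases with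
  | last =>
    rw [dl_mul_last] at hne
    rcases eq_or_ne (Fin.last N) j with rfl | hi
    · rw [smul_one_diag, hdiag] at hne
      exact absurd rfl hne
    · rw [smul_one_of_ne _ hi, gridMat_of_lt _ (Fin.lt_last_iff_ne_last.2 hi.symm)] at hne
      simp at hne
  | cast k =>
    rw [dl_mul_castSucc] at hne
    rcases lt_trichotomy k.castSucc j with hi | hi | hi
    · rw [smul_one_of_ne _ hi.ne, sub_zero] at hne
      have hi' : k.succ ≤ j := by
        simp only [Fin.lt_def, Fin.le_def, Fin.val_succ, Fin.val_castSucc] at *; omega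
      exact near_grid h ht hi.le hi.le hi' (by omega) (by simp; omega) (by omega) (by omega)
        (sub_ne_zero.1 hne)
    · rw [← hi, smul_one_diag, gridMat_of_lt _ (Fin.castSucc_lt_succ), sub_zero, hdiag] at hne
      exact absurd rfl hne
    · have hi' : j < k.succ := hi.trans Fin.castSucc_lt_succ
      rw [smul_one_of_ne _ hi.ne', gridMat_of_lt _ hi, gridMat_of_lt _ hi'] at hne
      simp at hne

theorem near_of_time (h : Sep A B) {t : ℕ} (ht : t < N) (i j : Fin (N + 1))
    (hne : (gridMat A N K (t + 1) - gridMat A N K t) i j ≠ 0) :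
    stp (Near A B (1 / N)) ((t : ℝ) / N) ((i : ℝ) / N) ((j : ℝ) / N) := by
  rw [Matrix.sub_apply] at hne
  rcases le_or_gt i j with hi | hi
  · exact near_grid h ht hi hi hi (by omega) (by omega) (by omega) (by omega)
      (sub_ne_zero.1 hne)
  · rw [gridMat_of_lt _ hi, gridMat_of_lt _ hi] at hne
    simp at hne

/-- A division of `[0, 1]` into `p` grid segments, all near the wall at the same grid time. -/
theorem exists_near_chain (h : Sep A B) {p : ℕ} (hp : p.Prime) (hN : 0 < N) :
    ∃ t, 0 ≤ t ∧ t ≤ 1 ∧ Ch (stp (Near A B (1 / N)) t) p 0 1 := by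
  have : Fact p.Prime := ⟨hp⟩
  have hN' : (N : ℝ) ≠ 0 := by exact_mod_cast hN.ne'
  have h0 : gridMat A N (ZMod p) 0 = up N (ZMod p) := by
    ext i j
    by_cases hij : i ≤ j
    · have := h.bot _ (grid_mem (i := i) (j := j) (by exact_mod_cast hij) (by omega)
        (Nat.zero_le N)) (by simp)
      simp only [gridMat, up, hij, true_and, this, if_true]
    · simp [gridMat, up, hij]
  have h1 : gridMat A N (ZMod p) N = 0 := by
    ext i j
    by_cases hij : i ≤ j
    · have := h.top _ (grid_mem (i := i) (j := j) (by exact_mod_cast hij) (by omega)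
        (le_refl N)) (by simp [hN'])
      simp only [gridMat, this, and_false, if_false, Matrix.zero_apply]
    · simp [gridMat, hij]
  obtain ⟨t, ht, hne⟩ := exists_inc_ne_zero p N (gridMat A N (ZMod p))
    (fun t => gridMat A N (ZMod p) t 0 0) h0 h1
  obtain ⟨-, -, -, ht0, ht1⟩ := grid_mem (N := N) (le_refl 0) (Nat.zero_le N) ht.le
  refine ⟨(t : ℝ) / N, ht0, ht1, ?_⟩
  have := (ch_of_inc (near_of_right h ht) (near_of_time h ht) (near_of_left h ht) hne).map
    (R' := stp (Near A B (1 / N)) ((t : ℝ) / N)) (fun i : Fin (N + 1) => (i : ℝ) / N)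
    (fun _ _ hh => hh)
  simpa [hN'] using this

theorem isClosed_near (ε : ℝ) : IsClosed (Near A B ε) :=
  isClosed_prism.inter (Metric.isClosed_cthickening.inter Metric.isClosed_cthickening)

theorem near_mono {ε δ : ℝ} (hle : ε ≤ δ) : Near A B ε ⊆ Near A B δ :=
  inter_subset_inter_right _ (inter_subset_inter (Metric.cthickening_mono hle _)
    (Metric.cthickening_mono hle _))

theorem mem_of_near (h : Sep A B) {q : ℝ × ℝ × ℝ}
    (hq : ∀ n : ℕ, q ∈ Near A B (1 / ((n + 1 : ℕ) : ℝ))) : q ∈ A ∩ B := by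
  have key : ∀ C : Set (ℝ × ℝ × ℝ), IsClosed C →
      (∀ n : ℕ, q ∈ Metric.cthickening (1 / ((n + 1 : ℕ) : ℝ)) C) → q ∈ C := by
    intro C hC hn
    rw [← hC.closure_eq, Metric.closure_eq_iInter_cthickening]
    simp only [mem_iInter]
    intro δ hδ
    obtain ⟨n, hn'⟩ := exists_nat_one_div_lt hδ
    exact Metric.cthickening_mono (by push_cast; exact hn'.le) _ (hn n)
  exact ⟨key A h.closedA fun n => (hq n).2.1, key B h.closedB fun n => (hq n).2.2⟩

end

theorem divides_prime {p : ℕ} (hp : p.Prime) : Divides p := by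
  intro A B h
  -- times with sequences of division points that are near the wall, at finer and finer scales
  let C : ℕ → Set (ℝ × (ℕ → ℝ)) := fun n =>
    (Icc 0 1 ×ˢ Set.pi univ (fun _ => Icc 0 1)) ∩
      ({z | z.2 0 = 0} ∩ {z | z.2 p = 1} ∩
        ⋂ i ∈ Finset.range p,
          {z | (z.2 i, z.2 (i + 1), z.1) ∈ Near A B (1 / ((n + 1 : ℕ) : ℝ))})
  have hcomp : IsCompact ((Icc (0:ℝ) 1) ×ˢ Set.pi univ (fun _ : ℕ => Icc (0:ℝ) 1)) :=
    isCompact_Icc.prod (isCompact_univ_pi fun _ => isCompact_Icc)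
  have hcl : ∀ n, IsClosed (C n) := by
    intro n
    refine hcomp.isClosed.inter ((IsClosed.inter ?_ ?_).inter (isClosed_biInter fun i _ => ?_))
    · exact isClosed_eq (by fun_prop) (by fun_prop)
    · exact isClosed_eq (by fun_prop) (by fun_prop)
    · exact (isClosed_near _).preimage
        (f := fun z : ℝ × (ℕ → ℝ) => (z.2 i, z.2 (i + 1), z.1)) (by fun_prop)
  obtain ⟨⟨t, x⟩, hx⟩ := IsCompact.nonempty_iInter_of_sequence_nonempty_isCompact_isClosed C
    (by
      intro n
      refine inter_subset_inter_right _ (inter_subset_inter_right _ ?_)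
      refine iInter₂_mono fun i _ z hz => near_mono ?_ hz
      gcongr
      omega)
    (by
      intro n
      obtain ⟨t, t0, t1, hch⟩ := exists_near_chain h hp (Nat.succ_pos n)
      obtain ⟨x, x0, xp, hx, hx'⟩ := hch.seq
      refine ⟨(t, x), ⟨⟨t0, t1⟩, ?_⟩, ⟨x0, xp⟩, ?_⟩
      · intro i _
        rcases lt_or_ge i p with hi | hi
        · obtain ⟨h1, h2, h3, -, -⟩ := (hx i hi).1
          exact ⟨h1, h2.trans h3⟩
        · show x i ∈ Icc (0:ℝ) 1
          rw [hx' i hi]; simp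
      · simp only [mem_iInter, Finset.mem_range]
        exact fun i hi => hx i hi)
    (hcomp.of_isClosed_subset (hcl 0) inter_subset_left) hcl
  simp only [mem_iInter] at hx
  obtain ⟨⟨⟨t0, t1⟩, -⟩, ⟨x0, xp⟩, -⟩ := hx 0
  refine ⟨t, t0, t1, ?_⟩
  have x0' : x 0 = 0 := x0
  have xp' : x p = 1 := xp
  rw [← x0', ← xp']
  refine Ch.of_seq x fun i hi => mem_of_near h fun n => ?_
  have := (hx n).2.2
  simp only [mem_iInter, Finset.mem_range] at this
  exact this i hi

/-! ### Products of numbers of parts -/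

theorem isClosed_split {S : Set (ℝ × ℝ × ℝ)} (hS : IsClosed S) (hsub : S ⊆ Prism) (n : ℕ) :
    IsClosed (Split S n) := by
  induction n with
  | zero =>
    exact isClosed_eq (f := fun q : ℝ × ℝ × ℝ => q.1) (g := fun q => q.2.1)
      (by fun_prop) (by fun_prop)
  | succ n ih =>
    -- the first division point ranges over a compact interval, so it can be projected away
    have hcl : IsClosed {z : Icc (0:ℝ) 1 × (ℝ × ℝ × ℝ) |
        (z.2.1, (z.1 : ℝ), z.2.2.2) ∈ S ∧ ((z.1 : ℝ), z.2.2.1, z.2.2.2) ∈ Split S n} :=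
      (hS.preimage (f := fun z : Icc (0:ℝ) 1 × (ℝ × ℝ × ℝ) => (z.2.1, (z.1 : ℝ), z.2.2.2))
        (by fun_prop)).inter
      (ih.preimage (f := fun z : Icc (0:ℝ) 1 × (ℝ × ℝ × ℝ) => ((z.1 : ℝ), z.2.2.1, z.2.2.2))
        (by fun_prop))
    convert isClosedMap_snd_of_compactSpace _ hcl using 1
    ext ⟨a, b, t⟩
    constructor
    · rintro ⟨c, h1, h2⟩
      have h1' : (a, c, t) ∈ S := h1
      obtain ⟨ha, hac, hc, -, -⟩ := hsub h1'
      exact ⟨(⟨c, ha.trans hac, hc⟩, (a, b, t)), ⟨h1, h2⟩, rfl⟩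
    · rintro ⟨⟨⟨c, hc⟩, q⟩, ⟨h1, h2⟩, rfl⟩
      exact ⟨c, h1, h2⟩

theorem ch_le {S : Set (ℝ × ℝ × ℝ)} (hsub : S ⊆ Prism) {t : ℝ} :
    ∀ {n : ℕ} {a b : ℝ}, Ch (stp S t) n a b → a ≤ b
  | 0, _, _, e => le_of_eq e
  | _ + 1, _, _, ⟨_, h1, h2⟩ => (hsub h1).2.1.trans (ch_le hsub h2)

theorem split_sub {S : Set (ℝ × ℝ × ℝ)} (hsub : S ⊆ Prism) :
    ∀ n : ℕ, Split S (n + 1) ⊆ Prism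
  | 0, (a, b, t), ⟨c, h1, h2⟩ => by
      have e : c = b := h2
      subst e
      exact hsub h1
  | n + 1, (a, b, t), ⟨c, h1, h2⟩ => by
      obtain ⟨h1a, h1b, h1c, h1d, h1e⟩ := hsub h1
      obtain ⟨h2a, h2b, h2c, -, -⟩ := split_sub hsub n (show (c, b, t) ∈ Split S (n + 1) from h2)
      exact ⟨h1a, h1b.trans h2b, h2c, h1d, h1e⟩

theorem split_diag {S : Set (ℝ × ℝ × ℝ)} (hsub : S ⊆ Prism) (n : ℕ) (a t : ℝ) :
    (a, a, t) ∈ Split S (n + 1) ↔ (a, a, t) ∈ S := by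
  constructor
  · rintro ⟨c, h1, h2⟩
    have h1' : (a, c, t) ∈ S := h1
    have e : c = a := le_antisymm (ch_le hsub h2) (hsub h1').2.1
    rwa [e] at h1'
  · intro ha
    exact Ch.of_seq (n := n + 1) (fun _ => a) (fun _ _ => ha)

/-- If `[0, 1]` can always be divided into `n` parts, then any path in the prism from the
bottom to the top meets a segment that splits into `n` parts: pull the separating pair back along
the path, identifying the moving segment affinely with `[0, 1]`. -/
theorem path_meets {A B : Set (ℝ × ℝ × ℝ)} (h : Sep A B) {n : ℕ} (hn : Divides n)
    {z q : ℝ × ℝ × ℝ} (hz : z.2.2 = 0) (hq : q.2.2 = 1)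
    (hj : JoinedIn (Prism \ Split (A ∩ B) n) z q) : False := by
  let γ : ℝ → ℝ × ℝ × ℝ := hj.somePath.extend
  have hγ : Continuous γ := hj.somePath.continuous_extend
  have hγ0 : γ 0 = z := hj.somePath.extend_zero
  have hγ1 : γ 1 = q := hj.somePath.extend_one
  have hmem : ∀ t, 0 ≤ t → t ≤ 1 → γ t ∈ Prism \ Split (A ∩ B) n := by
    intro t h0 h1
    have e : γ t = hj.somePath ⟨t, h0, h1⟩ := hj.somePath.extend_apply ⟨h0, h1⟩
    rw [e]
    exact hj.somePath_mem _
  let g : ℝ → ℝ → ℝ := fun t s => (γ t).1 + s * ((γ t).2.1 - (γ t).1)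
  let φ : ℝ × ℝ × ℝ → ℝ × ℝ × ℝ := fun w => (g w.2.2 w.1, g w.2.2 w.2.1, (γ w.2.2).2.2)
  have hφ : Continuous φ := by
    simp only [φ, g]
    fun_prop
  have hφP : ∀ w ∈ Prism, φ w ∈ Prism := by
    rintro ⟨a, b, t⟩ ⟨h1, h2, h3, h4, h5⟩
    simp only at h1 h2 h3 h4 h5
    obtain ⟨⟨g1, g2, g3, g4, g5⟩, -⟩ := hmem t h4 h5
    have g2' := sub_nonneg.2 g2
    refine ⟨?_, ?_, ?_, g4, g5⟩ <;> simp only [φ, g]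
    · positivity
    · gcongr
    · nlinarith
  have hsep : Sep (Prism ∩ φ ⁻¹' A) (Prism ∩ φ ⁻¹' B) := by
    have hd : ∀ C : Set (ℝ × ℝ × ℝ), (∀ a t, 0 ≤ a → a ≤ 1 → 0 ≤ t → t ≤ 1 →
        ((a, a, t) ∈ C ↔ (0, 0, t) ∈ C)) → ∀ a t, 0 ≤ a → a ≤ 1 → 0 ≤ t → t ≤ 1 →
        ((a, a, t) ∈ Prism ∩ φ ⁻¹' C ↔ (0, 0, t) ∈ Prism ∩ φ ⁻¹' C) := by
      intro C hC a t h1 h2 h3 h4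
      have p1 : (a, a, t) ∈ Prism := ⟨h1, le_rfl, h2, h3, h4⟩
      have p0 : ((0, 0, t) : ℝ × ℝ × ℝ) ∈ Prism := ⟨le_rfl, le_rfl, zero_le_one, h3, h4⟩
      obtain ⟨u1, -, u3, u4, u5⟩ := hφP _ p1
      obtain ⟨v1, -, v3, v4, v5⟩ := hφP _ p0
      have e1 := hC (g t a) (γ t).2.2 u1 u3 u4 u5
      have e0 := hC (g t 0) (γ t).2.2 v1 v3 v4 v5
      constructor
      · exact fun hh => ⟨p0, e0.2 (e1.1 hh.2)⟩
      · exact fun hh => ⟨p1, e1.2 (e0.1 hh.2)⟩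
    refine ⟨isClosed_prism.inter (h.closedA.preimage hφ),
      isClosed_prism.inter (h.closedB.preimage hφ), inter_subset_left, inter_subset_left,
      ?_, ?_, ?_, hd A h.diagA, hd B h.diagB⟩
    · intro w hw
      exact (h.cover _ (hφP w hw)).imp (fun hh => ⟨hw, hh⟩) (fun hh => ⟨hw, hh⟩)
    · intro w hw h0
      refine ⟨hw, h.bot _ (hφP w hw) ?_⟩
      simp only [φ, h0, hγ0, hz]
    · intro w hw h1 hA
      refine h.top _ (hφP w hw) ?_ hA.2
      simp only [φ, h1, hγ1, hq]
  obtain ⟨t, t0, t1, hch⟩ := hn _ _ hsep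
  refine (hmem t t0 t1).2 ?_
  have := hch.map (R' := stp (A ∩ B) (γ t).2.2) (g t) (fun a b hab => ⟨hab.1.2, hab.2.2⟩)
  show Ch (stp (A ∩ B) (γ t).2.2) n (γ t).1 (γ t).2.1
  simpa [g] using this

/-- The set of splittable segments contains the wall of a separating pair. The new `A` consists
of that set and of everything that can be reached from the bottom without meeting it. -/
theorem exists_sep {A B : Set (ℝ × ℝ × ℝ)} (h : Sep A B) {n : ℕ} (hn : Divides (n + 1)) :
    ∃ A' B', Sep A' B' ∧ A' ∩ B' ⊆ Split (A ∩ B) (n + 1) := by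
  have hsub : A ∩ B ⊆ Prism := inter_subset_left.trans h.subA
  set S := Split (A ∩ B) (n + 1) with hSdef
  have hS : IsClosed S := isClosed_split (h.closedA.inter h.closedB) hsub _
  have hSP : S ⊆ Prism := split_sub hsub n
  let W : Set (ℝ × ℝ × ℝ) := {q | ∃ z, z.2.2 = 0 ∧ JoinedIn (Prism \ S) z q}
  have hWP : W ⊆ Prism \ S := fun q ⟨z, _, hj⟩ => hj.target_mem
  have hWseg : ∀ q r, segment ℝ q r ⊆ Prism \ S → q ∈ W → r ∈ W :=
    fun q r hseg ⟨z, hz, hj⟩ => ⟨z, hz, hj.trans (JoinedIn.of_segment_subset hseg)⟩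
  have hnhds : ∀ q ∈ Prism, q ∉ S → ∃ ε > 0, ∀ r ∈ Prism, dist r q < ε →
      segment ℝ q r ⊆ Prism \ S := by
    intro q hq hqS
    obtain ⟨ε, hε, hball⟩ := Metric.isOpen_iff.1 hS.isOpen_compl q hqS
    refine ⟨ε, hε, fun r hr hd w hw => ⟨convex_prism.segment_subset hq hr hw, ?_⟩⟩
    exact hball ((convex_ball q ε).segment_subset (Metric.mem_ball_self hε) hd hw)
  have hdiagS : ∀ a t, 0 ≤ a → a ≤ 1 → 0 ≤ t → t ≤ 1 → ((a, a, t) ∈ S ↔ (0, 0, t) ∈ S) := by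
    intro a t h1 h2 h3 h4
    rw [hSdef, split_diag hsub, split_diag hsub]
    exact and_congr (h.diagA a t h1 h2 h3 h4) (h.diagB a t h1 h2 h3 h4)
  have hdiagW : ∀ a t, 0 ≤ a → a ≤ 1 → 0 ≤ t → t ≤ 1 → ((a, a, t) ∈ W ↔ (0, 0, t) ∈ W) := by
    intro a t h1 h2 h3 h4
    by_cases h0 : ((0, 0, t) : ℝ × ℝ × ℝ) ∈ S
    · have ha := (hdiagS a t h1 h2 h3 h4).2 h0
      exact ⟨fun hw => absurd ha (hWP hw).2, fun hw => absurd h0 (hWP hw).2⟩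
    · have hseg : segment ℝ (a, a, t) ((0, 0, t) : ℝ × ℝ × ℝ) ⊆ Prism \ S := by
        rintro w ⟨u, v, hu, hv, huv, rfl⟩
        have e : u • ((a, a, t) : ℝ × ℝ × ℝ) + v • ((0, 0, t) : ℝ × ℝ × ℝ)
            = (u * a, u * a, t) := by
          simp only [Prod.smul_mk, Prod.mk_add_mk, smul_eq_mul, mul_zero, add_zero, ← add_mul,
            huv, one_mul]
        have hua : 0 ≤ u * a := mul_nonneg hu h1
        have hua' : u * a ≤ 1 := by nlinarith
        rw [e]
        exact ⟨⟨hua, le_rfl, hua', h3, h4⟩,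
          fun hh => h0 ((hdiagS _ t hua hua' h3 h4).1 hh)⟩
      exact ⟨hWseg _ _ hseg, hWseg _ _ (by rwa [segment_symm])⟩
  refine ⟨W ∪ S, Prism \ W, ⟨?_, ?_, ?_, sdiff_subset, ?_, ?_, ?_, ?_, ?_⟩, ?_⟩
  · refine isClosed_of_closure_subset fun q hq => ?_
    have hqP : q ∈ Prism := isClosed_prism.closure_subset_iff.2
      (union_subset (hWP.trans sdiff_subset) hSP) hq
    by_cases hqS : q ∈ S
    · exact Or.inr hqS
    · obtain ⟨ε, hε, hr⟩ := hnhds q hqP hqS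
      obtain ⟨r, hrW, hd⟩ := Metric.mem_closure_iff.1 hq ε hε
      rw [dist_comm] at hd
      rcases hrW with hrW | hrS
      · exact Or.inl (hWseg r q (by rw [segment_symm]; exact hr r (hWP hrW).1 hd) hrW)
      · exact absurd hrS (hr r (hSP hrS) hd (right_mem_segment ℝ q r)).2
  · refine isClosed_of_closure_subset fun q hq => ?_
    have hqP : q ∈ Prism := isClosed_prism.closure_subset_iff.2 sdiff_subset hq
    refine ⟨hqP, fun hqW => ?_⟩
    obtain ⟨ε, hε, hr⟩ := hnhds q hqP (hWP hqW).2
    obtain ⟨r, hrW, hd⟩ := Metric.mem_closure_iff.1 hq ε hε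
    rw [dist_comm] at hd
    exact hrW.2 (hWseg q r (hr r hrW.1 hd) hqW)
  · exact union_subset (hWP.trans sdiff_subset) hSP
  · intro q hq
    by_cases hqW : q ∈ W
    · exact Or.inl (Or.inl hqW)
    · exact Or.inr ⟨hq, hqW⟩
  · intro q hq h0
    by_cases hqS : q ∈ S
    · exact Or.inr hqS
    · exact Or.inl ⟨q, h0, JoinedIn.refl ⟨hq, hqS⟩⟩
  · rintro ⟨a, b, t⟩ hq h1 (⟨z, hz, hj⟩ | ⟨c, hc, -⟩)
    · exact path_meets h hn hz h1 hj
    · exact h.top _ (hsub hc) h1 hc.1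
  · exact fun a t h1 h2 h3 h4 => or_congr (hdiagW a t h1 h2 h3 h4) (hdiagS a t h1 h2 h3 h4)
  · intro a t h1 h2 h3 h4
    have p1 : (a, a, t) ∈ Prism := ⟨h1, le_rfl, h2, h3, h4⟩
    have p0 : ((0, 0, t) : ℝ × ℝ × ℝ) ∈ Prism := ⟨le_rfl, le_rfl, zero_le_one, h3, h4⟩
    exact and_congr (iff_of_true p1 p0) (not_congr (hdiagW a t h1 h2 h3 h4))
  · rintro q ⟨hW | hS', hB⟩
    · exact absurd hW hB.2
    · exact hS'

theorem divides_mul {m n : ℕ} (hm : Divides m) (hn : Divides (n + 1)) :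
    Divides (m * (n + 1)) := by
  intro A B h
  obtain ⟨A', B', h', hsub⟩ := exists_sep h hn
  obtain ⟨t, t0, t1, hch⟩ := hm A' B' h'
  exact ⟨t, t0, t1, hch.mul fun a b hab => hsub hab⟩

theorem divides_one : Divides 1 := by
  intro A B h
  have hP : ∀ t ∈ Icc (0:ℝ) 1, ((0, 1, t) : ℝ × ℝ × ℝ) ∈ Prism :=
    fun t ht => ⟨le_rfl, zero_le_one, le_rfl, ht.1, ht.2⟩
  have hc : Continuous fun t : ℝ => ((0, 1, t) : ℝ × ℝ × ℝ) := by fun_prop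
  have h1 : (1:ℝ) ∈ Icc (0:ℝ) 1 := ⟨zero_le_one, le_rfl⟩
  have h0 : (0:ℝ) ∈ Icc (0:ℝ) 1 := ⟨le_rfl, zero_le_one⟩
  obtain ⟨t, ht, hA, hB⟩ := isPreconnected_closed_iff.1 (isPreconnected_Icc (a := (0:ℝ)) (b := 1))
    _ _ (h.closedA.preimage hc) (h.closedB.preimage hc) (fun t ht => h.cover _ (hP t ht))
    ⟨0, h0, h.bot _ (hP 0 h0) rfl⟩
    ⟨1, h1, (h.cover _ (hP 1 h1)).resolve_left (h.top _ (hP 1 h1) rfl)⟩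
  exact ⟨t, ht.1, ht.2, 1, ⟨hA, hB⟩, rfl⟩

theorem divides_of_pos (m : ℕ) (hm : 0 < m) : Divides m := by
  induction m using induction_on_primes with
  | zero => omega
  | one => exact divides_one
  | prime_mul p n hp ih =>
    obtain ⟨k, rfl⟩ : ∃ k, n = k + 1 := Nat.exists_eq_succ_of_ne_zero (by rintro rfl; simp at hm)
    exact divides_mul (divides_prime hp) (ih (Nat.succ_pos k))

end Equipart

theorem stmt_0 (f : ℝ × ℝ → ℝ)
    (hf : ContinuousOn f {q : ℝ × ℝ | 0 ≤ q.1 ∧ q.1 ≤ q.2 ∧ q.2 ≤ 1})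
    (hdeg : ∀ a ∈ Icc (0:ℝ) 1, f (a, a) = 0)
    (m : ℕ) (hm : 0 < m) :
    ∃ x : ℕ → ℝ, x 0 = 0 ∧ x m = 1 ∧ (∀ i < m, x i ≤ x (i + 1)) ∧
      ∀ i < m, ∀ j < m, f (x i, x (i + 1)) = f (x j, x (j + 1)) := by
  have hcompact : IsCompact {q : ℝ × ℝ | 0 ≤ q.1 ∧ q.1 ≤ q.2 ∧ q.2 ≤ 1} := by
    refine (isCompact_Icc.prod isCompact_Icc : IsCompact (Icc (0:ℝ) 1 ×ˢ Icc (0:ℝ) 1)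
      ).of_isClosed_subset ?_ ?_
    · simp only [Set.ofPred_and]
      refine IsClosed.inter ?_ (IsClosed.inter ?_ ?_) <;>
        exact isClosed_le (by fun_prop) (by fun_prop)
    · rintro ⟨a, b⟩ ⟨h1, h2, h3⟩
      exact ⟨⟨h1, h2.trans h3⟩, ⟨h1.trans h2, h3⟩⟩
  obtain ⟨M, hM⟩ := hcompact.exists_bound_of_continuousOn hf
  -- at time `t` the values of `f` are compared with the level `lev t`, which runs from below
  -- the minimum of `f` to above its maximum
  let lev : ℝ → ℝ := fun t => (M + 1) * (2 * t - 1)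
  have hlev : Continuous lev := by simp only [lev]; fun_prop
  have hF : ContinuousOn (fun q : ℝ × ℝ × ℝ => f (q.1, q.2.1)) Equipart.Prism :=
    hf.comp (f := fun q : ℝ × ℝ × ℝ => (q.1, q.2.1)) (by fun_prop)
      (fun q hq => ⟨hq.1, hq.2.1, hq.2.2.1⟩)
  have hL : ContinuousOn (fun q : ℝ × ℝ × ℝ => lev q.2.2) Equipart.Prism :=
    (hlev.comp (by fun_prop : Continuous fun q : ℝ × ℝ × ℝ => q.2.2)).continuousOn
  have hb : ∀ q ∈ Equipart.Prism, -M ≤ f (q.1, q.2.1) ∧ f (q.1, q.2.1) ≤ M := fun q hq =>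
    abs_le.1 (hM (q.1, q.2.1) ⟨hq.1, hq.2.1, hq.2.2.1⟩)
  have hsep : Equipart.Sep {q ∈ Equipart.Prism | lev q.2.2 ≤ f (q.1, q.2.1)}
      {q ∈ Equipart.Prism | f (q.1, q.2.1) ≤ lev q.2.2} := by
    have hp : ∀ a t : ℝ, 0 ≤ a → a ≤ 1 → 0 ≤ t → t ≤ 1 → (a, a, t) ∈ Equipart.Prism :=
      fun a t h1 h2 h3 h4 => ⟨h1, le_rfl, h2, h3, h4⟩
    refine ⟨Equipart.isClosed_prism.isClosed_le hL hF, Equipart.isClosed_prism.isClosed_le hF hL,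
      fun q hq => hq.1, fun q hq => hq.1, ?_, ?_, ?_, ?_, ?_⟩
    · exact fun q hq => (le_total (lev q.2.2) (f (q.1, q.2.1))).imp
        (fun hh => ⟨hq, hh⟩) (fun hh => ⟨hq, hh⟩)
    · intro q hq h0
      refine ⟨hq, ?_⟩
      have := (hb q hq).1
      simp only [lev, h0]
      linarith
    · rintro q hq h1 ⟨-, hA⟩
      have := (hb q hq).2
      simp only [lev, h1] at hA
      linarith
    · intro a t h1 h2 h3 h4
      refine and_congr (iff_of_true (hp a t h1 h2 h3 h4) (hp 0 t le_rfl zero_le_one h3 h4)) ?_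
      simp only [hdeg a ⟨h1, h2⟩, hdeg 0 ⟨le_rfl, zero_le_one⟩]
    · intro a t h1 h2 h3 h4
      refine and_congr (iff_of_true (hp a t h1 h2 h3 h4) (hp 0 t le_rfl zero_le_one h3 h4)) ?_
      simp only [hdeg a ⟨h1, h2⟩, hdeg 0 ⟨le_rfl, zero_le_one⟩]
  obtain ⟨t, -, -, hch⟩ := Equipart.divides_of_pos m hm _ _ hsep
  obtain ⟨x, x0, xm, hx, -⟩ := hch.seq
  have hval : ∀ i < m, f (x i, x (i + 1)) = lev t := fun i hi =>
    le_antisymm (hx i hi).2.2 (hx i hi).1.2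
  exact ⟨x, x0, xm, fun i hi => (hx i hi).1.1.2.1,
    fun i hi j hj => (hval i hi).trans (hval j hj).symm⟩
end

section
/- For every positive integer m and every Lipschitz continuous function f : {(a,b) ∈ [0,1]² : a ≤ b} → ℝ with f(a,a) = 0 for all a, and every ε > 0, there exist 0 = x₀ ≤ x₁ ≤ ⋯ ≤ x_m = 1 such that |f(x_{i-1},x_i) − f(x_{j-1},x_j)| < ε for all i, j. -/
/-!
The points of `[0, 1]` are replaced by a grid and the values of `f` by integer levels `y`
(after rescaling by the grid size), so that `f` becomes a function `F : ℕ → ℕ → ℝ` with bounded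
steps which vanishes on the diagonal, and the task is to find a level `y` and a chain of `m` grid
segments from `0` to the right end on each of which `F` is boundedly close to `y`.

For `m = 1`, the indicator `s y a b` of `y < F a b` changes between neighbouring triples
`(y, a, b)` only where `F a b` is close to `y`. It is `true` for very negative `y`, `false` for
large `y`, and on the diagonal it is the indicator of `y < 0`. A function with these
properties, for chains of length `q` in place of single segments, is called a `q`-barrier
(`IsBarrier`). Along the line `(·, 0, n + 1)` a barrier has to change, so a `q`-barrier yields the
desired chain of length `q`. It remains to build a `p * q`-barrier from a `q`-barrier for every
prime `p` (`IsBarrier.mul_prime`).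

To this end, let `s` be a `q`-barrier, fix `y` and the right end `c`, and let
`T u a = ∑ b < c, (s a (b + 1) - s a b) * u b`. The signed number of `k`-step chains of jumps of
`s`, which start at `a`, is `iter s c k = T ^ k 1`. Summation by parts shows that it is locally
constant in `(y, a, c)` off the triples joined by a chain of length `k * q` (`iter_succ_left`,
`iter_succ_right`, `iter_congr_array`), except between the levels `-1` and `0`, where the diagonal
values of `s` jump. That jump replaces `T` by `T - 1`, and modulo the prime `p` one has
`(T - 1) ^ p = T ^ p - 1`. So the count modulo `p` drops exactly by `1` when passing to negative
levels (`iter_diag`), and adding `1` on the negative levels restores local constancy. The count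
vanishes at very high and very low levels, so the corrected count is `0` at the top and `1` at
the bottom: its nonvanishing is a `p * q`-barrier.

The induction over the prime factors is needed because for `m` that is not a prime power the
binomial expansion of `(T - 1) ^ m` has no such collapse modulo a prime.
-/

open Set

/-! ### Signed counts of chains -/

section Count

variable {R : Type*} [CommRing R]

/-- The signed number of `k`-step chains `a = b₀, b₁, …, b_k < c` in which every step
`b_i, b_{i+1}` is a jump `s b_i b_{i+1} → s b_i (b_{i+1} + 1)` of the array `s`. -/
def iter (s : ℕ → ℕ → R) (c : ℕ) : ℕ → ℕ → R
  | 0, a => if a < c then 1 else 0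
  | k + 1, a => ∑ b ∈ Finset.range c, (s a (b + 1) - s a b) * iter s c k b

/-- `k` consecutive steps of the relation `P` lead from `a` to `c` or to `c - 1`. -/
def LinkedTo (P : ℕ → ℕ → Prop) (c : ℕ) : ℕ → ℕ → Prop
  | 0, a => a = c ∨ a + 1 = c
  | k + 1, a => ∃ b, a ≤ b ∧ P a b ∧ LinkedTo P c k b

lemma sum_by_parts (t u : ℕ → R) (c : ℕ) (ht : t 0 = 0) (hu : u c = 0) :
    ∑ b ∈ Finset.range c, (t (b + 1) - t b) * u b
      = ∑ b ∈ Finset.range c, t (b + 1) * (u b - u (b + 1)) := by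
  have h := Finset.sum_range_sub (fun b => t b * u b) c
  simp only [ht, hu, zero_mul, mul_zero, sub_zero] at h
  rw [← sub_eq_zero, ← Finset.sum_sub_distrib, ← h]
  refine Finset.sum_congr rfl fun b _ => ?_
  ring

lemma iter_of_le {s : ℕ → ℕ → R} {d : R} (hd : ∀ a b, b ≤ a → s a b = d) {c a : ℕ} (h : c ≤ a)
    (k : ℕ) : iter s c k a = 0 := by
  cases k with
  | zero => simp [iter, h]
  | succ k =>
    refine Finset.sum_eq_zero fun b hb => ?_
    have hb := Finset.mem_range.1 hb
    rw [hd a (b + 1) (by omega), hd a b (by omega), sub_self, zero_mul]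

lemma iter_const {s : ℕ → ℕ → R} {d : R} (hd : ∀ a b, s a b = d) (c k a : ℕ) :
    iter s c (k + 1) a = 0 :=
  Finset.sum_eq_zero fun b _ => by rw [hd, hd, sub_self, zero_mul]

lemma iter_succ_left {s : ℕ → ℕ → R} {d : R} (hd : ∀ a b, b ≤ a → s a b = d)
    {P : ℕ → ℕ → Prop} (hA : ∀ a b, a ≤ b → s a (b + 1) ≠ s (a + 1) (b + 1) → P a b)
    {c : ℕ} (k : ℕ) {a : ℕ} (hac : a < c) (h : iter s c k a ≠ iter s c k (a + 1)) :
    LinkedTo P c k a := by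
  induction k generalizing a with
  | zero =>
    right
    by_contra hne
    exact h (by simp [iter, hac, show a + 1 < c by omega])
  | succ k ih =>
    set t : ℕ → R := fun b => s a b - s (a + 1) b with ht
    have hsum : iter s c (k + 1) a - iter s c (k + 1) (a + 1)
        = ∑ b ∈ Finset.range c, t (b + 1) * (iter s c k b - iter s c k (b + 1)) := by
      rw [← sum_by_parts t _ c (by simp [ht, hd]) (iter_of_le hd le_rfl k)]
      simp only [iter, ht, ← Finset.sum_sub_distrib]
      exact Finset.sum_congr rfl fun b _ => by ring
    rw [← sub_ne_zero, hsum] at h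
    obtain ⟨b, hb, hne⟩ := Finset.exists_ne_zero_of_sum_ne_zero h
    have ht0 : s a (b + 1) ≠ s (a + 1) (b + 1) := sub_ne_zero.1 (left_ne_zero_of_mul hne)
    have hab : a ≤ b := by
      by_contra hlt
      exact ht0 (by rw [hd a _ (by omega), hd (a + 1) _ (by omega)])
    exact ⟨b, hab, hA a b hab ht0,
      ih (Finset.mem_range.1 hb) (sub_ne_zero.1 (right_ne_zero_of_mul hne))⟩

lemma iter_succ_right {s : ℕ → ℕ → R} {d : R} (hd : ∀ a b, b ≤ a → s a b = d)
    {P : ℕ → ℕ → Prop} (hB : ∀ a b, a ≤ b → s a (b + 1) ≠ s a b → P a b)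
    {c : ℕ} (k : ℕ) {a : ℕ} (h : iter s (c + 1) k a ≠ iter s c k a) :
    LinkedTo P (c + 1) k a := by
  induction k generalizing a with
  | zero =>
    right
    by_contra hne
    apply h
    simp only [iter]
    congr 1
    exact propext ⟨fun _ => by omega, fun _ => by omega⟩
  | succ k ih =>
    have hsum : iter s (c + 1) (k + 1) a - iter s c (k + 1) a
        = ∑ b ∈ Finset.range (c + 1),
          (s a (b + 1) - s a b) * (iter s (c + 1) k b - iter s c k b) := by
      have h0 : iter s c (k + 1) a
          = ∑ b ∈ Finset.range (c + 1), (s a (b + 1) - s a b) * iter s c k b := by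
        rw [Finset.sum_range_succ, iter_of_le hd le_rfl k, mul_zero, add_zero]; rfl
      rw [h0]
      simp only [iter, ← Finset.sum_sub_distrib]
      exact Finset.sum_congr rfl fun b _ => by ring
    rw [← sub_ne_zero, hsum] at h
    obtain ⟨b, hb, hne⟩ := Finset.exists_ne_zero_of_sum_ne_zero h
    have hs : s a (b + 1) ≠ s a b := sub_ne_zero.1 (left_ne_zero_of_mul hne)
    have hab : a ≤ b := by
      by_contra hlt
      exact hs (by rw [hd a _ (by omega), hd a _ (by omega)])
    exact ⟨b, hab, hB a b hab hs, ih (sub_ne_zero.1 (right_ne_zero_of_mul hne))⟩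

/-- Two arrays `s`, `s'` with the same diagonal value, such as the indicators at two neighbouring
levels of the same sign, have the same count off the joined points. -/
lemma iter_congr_array {s s' : ℕ → ℕ → R} {d : R} (hd : ∀ a b, b ≤ a → s a b = d)
    (hd' : ∀ a b, b ≤ a → s' a b = d)
    {P : ℕ → ℕ → Prop} (hA : ∀ a b, a ≤ b → s a (b + 1) ≠ s (a + 1) (b + 1) → P a b)
    (hB : ∀ a b, a ≤ b → s' a (b + 1) ≠ s' a b → P a b)
    (hC : ∀ a b, a ≤ b → s a (b + 1) ≠ s' a (b + 1) → P a b)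
    {c : ℕ} (k : ℕ) {a : ℕ} (h : iter s c k a ≠ iter s' c k a) :
    LinkedTo P c k a := by
  induction k generalizing a with
  | zero => exact absurd rfl h
  | succ k ih =>
    set t : ℕ → R := fun b => s a b - s' a b with ht
    have hsum : iter s c (k + 1) a - iter s' c (k + 1) a
        = ∑ b ∈ Finset.range c, t (b + 1) * (iter s c k b - iter s c k (b + 1))
          + ∑ b ∈ Finset.range c,
            (s' a (b + 1) - s' a b) * (iter s c k b - iter s' c k b) := by
      rw [← sum_by_parts t _ c (by simp [ht, hd, hd']) (iter_of_le hd le_rfl k)]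
      simp only [iter, ht, ← Finset.sum_sub_distrib, ← Finset.sum_add_distrib]
      exact Finset.sum_congr rfl fun b _ => by ring
    rw [← sub_ne_zero, hsum] at h
    by_cases h1 : ∑ b ∈ Finset.range c, t (b + 1) * (iter s c k b - iter s c k (b + 1)) = 0
    · rw [h1, zero_add] at h
      obtain ⟨b, hb, hne⟩ := Finset.exists_ne_zero_of_sum_ne_zero h
      have hs : s' a (b + 1) ≠ s' a b := sub_ne_zero.1 (left_ne_zero_of_mul hne)
      have hab : a ≤ b := by
        by_contra hlt
        exact hs (by rw [hd' a _ (by omega), hd' a _ (by omega)])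
      exact ⟨b, hab, hB a b hab hs, ih (sub_ne_zero.1 (right_ne_zero_of_mul hne))⟩
    · obtain ⟨b, hb, hne⟩ := Finset.exists_ne_zero_of_sum_ne_zero h1
      have ht0 : s a (b + 1) ≠ s' a (b + 1) := sub_ne_zero.1 (left_ne_zero_of_mul hne)
      have hab : a ≤ b := by
        by_contra hlt
        exact ht0 (by rw [hd a _ (by omega), hd' a _ (by omega)])
      exact ⟨b, hab, hC a b hab ht0, iter_succ_left hd hA k (Finset.mem_range.1 hb)
        (sub_ne_zero.1 (right_ne_zero_of_mul hne))⟩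

/-- The linear operator whose powers produce `iter s c`. -/
def stepOp (s : ℕ → ℕ → R) (c : ℕ) : Module.End R (ℕ → R) where
  toFun u a := ∑ b ∈ Finset.range c, (s a (b + 1) - s a b) * u b
  map_add' u v := by
    ext a
    simp only [Pi.add_apply, mul_add, Finset.sum_add_distrib]
  map_smul' r u := by
    ext a
    simp only [Pi.smul_apply, smul_eq_mul, RingHom.id_apply, Finset.mul_sum]
    exact Finset.sum_congr rfl fun b _ => by ring

/-- The projection to functions supported on `[0, c)`; it is a unit for `stepOp s c`. -/
def cutOp (R : Type*) [CommRing R] (c : ℕ) : Module.End R (ℕ → R) where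
  toFun u a := if a < c then u a else 0
  map_add' u v := by ext a; by_cases h : a < c <;> simp [h]
  map_smul' r u := by ext a; by_cases h : a < c <;> simp [h]

lemma stepOp_pow (s : ℕ → ℕ → R) (c k : ℕ) :
    (stepOp s c ^ k) (fun a => if a < c then 1 else 0) = iter s c k := by
  induction k with
  | zero => rfl
  | succ k ih => rw [pow_succ', Module.End.mul_apply, ih]; rfl

/-- Raising the values on and below the diagonal from `0` to `1` subtracts the identity from the
step operator, hence, in characteristic `p`, also from its `p`-th power. -/
lemma iter_diag {p : ℕ} [hp : Fact p.Prime] {s s' : ℕ → ℕ → ZMod p}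
    (hd : ∀ a b, b ≤ a → s a b = 0) (hd' : ∀ a b, b ≤ a → s' a b = 1)
    (hs : ∀ a b, a < b → s' a b = s a b) {a c : ℕ} (hac : a < c) :
    iter s' c p a = iter s c p a - 1 := by
  have hT : stepOp s' c = stepOp s c - cutOp (ZMod p) c := by
    ext1 u
    funext a
    have h : ∀ b, (s' a (b + 1) - s' a b) * u b
        = (s a (b + 1) - s a b) * u b - (if a = b then u b else 0) := by
      intro b
      rcases lt_trichotomy a b with h | h | h
      · rw [hs a b h, hs a (b + 1) (by omega), if_neg (by omega)]; ring
      · subst h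
        rw [hs a (a + 1) (by omega), hd a a le_rfl, hd' a a le_rfl, if_pos rfl]; ring
      · rw [hd' a b h.le, hd' a (b + 1) h, hd a b h.le, hd a (b + 1) h, if_neg (by omega)]; ring
    simp only [stepOp, cutOp, LinearMap.sub_apply, LinearMap.coe_mk, AddHom.coe_mk, Pi.sub_apply,
      h, Finset.sum_sub_distrib, Finset.sum_ite_eq, Finset.mem_range]
  have hQT : cutOp (ZMod p) c * stepOp s c = stepOp s c := by
    ext1 u
    funext a
    change (if a < c then stepOp s c u a else 0) = stepOp s c u a
    split_ifs with h
    · rfl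
    · change 0 = ∑ b ∈ Finset.range c, (s a (b + 1) - s a b) * u b
      refine (Finset.sum_eq_zero fun b hb => ?_).symm
      have hb := Finset.mem_range.1 hb
      rw [hd a (b + 1) (by omega), hd a b (by omega), sub_self, zero_mul]
  have hTQ : stepOp s c * cutOp (ZMod p) c = stepOp s c := by
    ext1 u
    funext a
    change ∑ b ∈ Finset.range c, (s a (b + 1) - s a b) * (if b < c then u b else 0)
      = ∑ b ∈ Finset.range c, (s a (b + 1) - s a b) * u b
    refine Finset.sum_congr rfl fun b hb => ?_
    rw [if_pos (Finset.mem_range.1 hb)]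
  have hQ : IsIdempotentElem (cutOp (ZMod p) c) := by
    ext1 u
    funext a
    change (if a < c then (if a < c then u a else 0) else 0) = if a < c then u a else 0
    split_ifs <;> rfl
  have : CharP (Module.End (ZMod p) (ℕ → ZMod p)) p :=
    charP_of_injective_algebraMap
      (algebraMap (ZMod p) (Module.End (ZMod p) (ℕ → ZMod p))).injective p
  have hpow : stepOp s' c ^ p = stepOp s c ^ p - cutOp (ZMod p) c := by
    rw [hT, sub_pow_char_of_commute p (hTQ.trans hQT.symm), hQ.pow_eq hp.out.ne_zero]
  have := congrFun (congrArg (fun A => A (fun a => if a < c then 1 else 0)) hpow) a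
  simp only [LinearMap.sub_apply, stepOp_pow, Pi.sub_apply] at this
  rw [this]
  simp [cutOp, hac]

end Count

/-! ### Barriers -/

section Barrier

/-- `m` consecutive grid segments, possibly degenerate, lead from `a` to `c`, with `F` within `ρ`
of `y` on each of them. -/
def Chain (F : ℕ → ℕ → ℝ) (ρ : ℝ) (y : ℤ) : ℕ → ℕ → ℕ → Prop
  | 0, a, c => a = c
  | m + 1, a, c => ∃ b, a ≤ b ∧ |F a b - y| ≤ ρ ∧ Chain F ρ y m b c

/-- A discretized function of a segment: it vanishes on degenerate segments, changes by at most `K`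
when both ends move by at most one, and is bounded by `L`. The value at `(a, b)` with `b < a` is
`0` by convention. -/
structure GridFun (K : ℝ) (L : ℕ) (F : ℕ → ℕ → ℝ) : Prop where
  diag : ∀ a b, b ≤ a → F a b = 0
  step : ∀ a b a' b', a ≤ b → a' ≤ b' → a ≤ a' + 1 → a' ≤ a + 1 → b ≤ b' + 1 → b' ≤ b + 1 →
    |F a b - F a' b'| ≤ K
  bdd : ∀ a b, |F a b| ≤ L

/-- An `m`-barrier for `F`: a two-valued function of a level and a segment, with prescribed values
at extreme levels and on degenerate segments, that changes only near chains of length `m`.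
When `b` is not moved, the segment is written `(a, b + 1)`, so that in each of the three
conditions `(a, b)` is one step away from the place of the change. -/
structure IsBarrier (F : ℕ → ℕ → ℝ) (L : ℕ) (m : ℕ) (ρ : ℝ) (s : ℤ → ℕ → ℕ → Bool) :
    Prop where
  diag : ∀ y a b, b ≤ a → s y a b = decide (y < 0)
  top : ∀ y a b, (L : ℤ) ≤ y → s y a b = false
  bot : ∀ y a b, y < -(L : ℤ) → s y a b = true
  left : ∀ y a b, a ≤ b → s y a (b + 1) ≠ s y (a + 1) (b + 1) → Chain F ρ y m a b
  right : ∀ y a b, a ≤ b → s y a (b + 1) ≠ s y a b → Chain F ρ y m a b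
  level : ∀ y a b, a ≤ b → s y a (b + 1) ≠ s (y + 1) a (b + 1) → Chain F ρ y m a b

variable {F : ℕ → ℕ → ℝ} {K ρ : ℝ} {L : ℕ}

lemma Chain.le {y : ℤ} {m a c : ℕ} (h : Chain F ρ y m a c) : a ≤ c := by
  induction m generalizing a with
  | zero => exact le_of_eq h
  | succ m ih =>
    obtain ⟨b, hab, -, h⟩ := h
    exact hab.trans (ih h)

lemma Chain.append {y : ℤ} {m n a b c : ℕ} (h : Chain F ρ y m a b) (h' : Chain F ρ y n b c) :
    Chain F ρ y (m + n) a c := by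
  induction m generalizing a with
  | zero => rw [zero_add, show a = b from h]; exact h'
  | succ m ih =>
    obtain ⟨x, hax, hx, h⟩ := h
    rw [Nat.succ_add]
    exact ⟨x, hax, hx, ih h⟩

lemma Chain.mono {y y' : ℤ} {ρ' : ℝ} {m a c : ℕ} (h : Chain F ρ y m a c)
    (hy : |(y : ℝ) - y'| + ρ ≤ ρ') : Chain F ρ' y' m a c := by
  induction m generalizing a with
  | zero => exact h
  | succ m ih =>
    obtain ⟨x, hax, hx, h⟩ := h
    refine ⟨x, hax, ?_, ih h⟩
    have := abs_add_le (F a x - y) (y - y')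
    rw [sub_add_sub_cancel] at this
    linarith

/-- Cutting off the last unit of a chain. -/
lemma Chain.trim (hF : GridFun K L F) {y : ℤ} {m a b c : ℕ} (h : Chain F ρ y m a c)
    (hc : c ≤ b + 1) : Chain F (ρ + K) y m (min a b) (min c b) := by
  induction m generalizing a with
  | zero => rw [show a = c from h]; exact rfl
  | succ m ih =>
    obtain ⟨x, hax, hx, h⟩ := h
    have hxc := h.le
    refine ⟨min x b, min_le_min_right b hax, ?_, ih h⟩
    have h1 := hF.step (min a b) (min x b) a x (min_le_min_right b hax) hax
      (by omega) (by omega) (by omega) (by omega)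
    have := abs_add_le (F (min a b) (min x b) - F a x) (F a x - y)
    rw [sub_add_sub_cancel] at this
    linarith

lemma Chain.exists_seq {y : ℤ} {m a c : ℕ} (h : Chain F ρ y m a c) :
    ∃ x : ℕ → ℕ, x 0 = a ∧ x m = c ∧ (∀ i < m, x i ≤ x (i + 1)) ∧ (∀ i ≤ m, x i ≤ c) ∧
      ∀ i < m, |F (x i) (x (i + 1)) - y| ≤ ρ := by
  induction m generalizing a with
  | zero =>
    have h : a = c := h
    exact ⟨fun _ => a, rfl, h, by simp, by simp [h], by simp⟩
  | succ m ih =>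
    have hac := h.le
    obtain ⟨b, hab, hb, h⟩ := h
    obtain ⟨x, h0, hm, hx, hxc, hF⟩ := ih h
    refine ⟨fun i => Nat.casesOn i a x, rfl, hm, ?_, ?_, ?_⟩
    · rintro (_ | i) hi
      · simpa [h0] using hab
      · exact hx i (by omega)
    · rintro (_ | i) hi
      · exact hac
      · exact hxc i (by omega)
    · rintro (_ | i) hi
      · simpa [h0] using hb
      · exact hF i (by omega)

lemma LinkedTo.chain {P : ℕ → ℕ → Prop} {y : ℤ} {q : ℕ}
    (hP : ∀ a b, P a b → Chain F ρ y q a b) {c k a : ℕ} (h : LinkedTo P c k a) :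
    ∃ c', (c' = c ∨ c' + 1 = c) ∧ Chain F ρ y (k * q) a c' := by
  induction k generalizing a with
  | zero => exact ⟨a, h, by rw [zero_mul]; rfl⟩
  | succ k ih =>
    obtain ⟨b, -, hab, h⟩ := h
    obtain ⟨c', hc', h⟩ := ih h
    refine ⟨c', hc', ?_⟩
    rw [Nat.succ_mul, add_comm]
    exact (hP a b hab).append h

lemma GridFun.isBarrier_one (hF : GridFun K L F) :
    IsBarrier F L 1 (K + 1) (fun y a b => decide ((y : ℝ) < F a b)) := by
  have hsub : ∀ a b a' b', a ≤ b → a' ≤ b' → a ≤ a' + 1 → a' ≤ a + 1 → b ≤ b' + 1 →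
      b' ≤ b + 1 → F a b - F a' b' ≤ K ∧ -K ≤ F a b - F a' b' := fun a b a' b' h1 h2 h3 h4 h5 h6 =>
    (abs_le.1 (hF.step a b a' b' h1 h2 h3 h4 h5 h6)).symm
  refine ⟨?_, ?_, ?_, ?_, ?_, ?_⟩
  · intro y a b h
    simp [hF.diag a b h]
  · intro y a b h
    have := (abs_le.1 (hF.bdd a b)).2
    have h' : (L : ℝ) ≤ y := by exact_mod_cast h
    simp only [decide_eq_false_iff_not, not_lt]
    linarith
  · intro y a b h
    have := (abs_le.1 (hF.bdd a b)).1
    have h' : (y : ℝ) < -L := by exact_mod_cast h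
    simp only [decide_eq_true_eq]
    linarith
  · intro y a b h hne
    refine ⟨b, h, ?_, rfl⟩
    have h1 := hsub a b a (b + 1) h (by omega) (by omega) (by omega) (by omega) (by omega)
    have h2 := hsub a b (a + 1) (b + 1) h (by omega) (by omega) (by omega) (by omega) (by omega)
    rw [Ne, decide_eq_decide] at hne
    rw [abs_le]
    by_cases h3 : (y : ℝ) < F a (b + 1) <;> by_cases h4 : (y : ℝ) < F (a + 1) (b + 1)
    · tauto
    · constructor <;> linarith
    · constructor <;> linarith
    · tauto
  · intro y a b h hne
    refine ⟨b, h, ?_, rfl⟩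
    have h1 := hsub a b a (b + 1) h (by omega) (by omega) (by omega) (by omega) (by omega)
    rw [Ne, decide_eq_decide] at hne
    rw [abs_le]
    by_cases h3 : (y : ℝ) < F a (b + 1) <;> by_cases h4 : (y : ℝ) < F a b
    · tauto
    · constructor <;> linarith
    · constructor <;> linarith
    · tauto
  · intro y a b h hne
    refine ⟨b, h, ?_, rfl⟩
    have h1 := hsub a b a (b + 1) h (by omega) (by omega) (by omega) (by omega) (by omega)
    rw [Ne, decide_eq_decide] at hne
    push_cast at hne
    rw [abs_le]
    by_cases h3 : (y : ℝ) < F a (b + 1) <;> by_cases h4 : (y : ℝ) + 1 < F a (b + 1)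
    · tauto
    · constructor <;> linarith
    · linarith
    · tauto

/-- The level `y` of `s` as an array over `ZMod p`. -/
def arr (p : ℕ) (s : ℤ → ℕ → ℕ → Bool) (y : ℤ) (a b : ℕ) : ZMod p := if s y a b then 1 else 0

lemma ne_of_arr_ne {p : ℕ} {s : ℤ → ℕ → ℕ → Bool} {y y' : ℤ} {a b a' b' : ℕ}
    (h : arr p s y a b ≠ arr p s y' a' b') : s y a b ≠ s y' a' b' :=
  fun heq => h (by simp only [arr, heq])

/-- The count of `p`-step chains modulo `p`, corrected by `1` on the negative levels. -/
def corrected (p : ℕ) (s : ℤ → ℕ → ℕ → Bool) (y : ℤ) (a c : ℕ) : ZMod p :=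
  iter (arr p s y) c p a + if y < 0 then 1 else 0

lemma IsBarrier.mul_prime (hF : GridFun K L F) {p q : ℕ} (hp : p.Prime)
    {s : ℤ → ℕ → ℕ → Bool} (hs : IsBarrier F L q ρ s) :
    IsBarrier F L (p * q) (ρ + 1 + K) (fun y a c => decide (corrected p s y a c ≠ 0)) := by
  have : Fact p.Prime := ⟨hp⟩
  have hd : ∀ y a b, b ≤ a → arr p s y a b = if y < 0 then 1 else 0 := by
    intro y a b h
    simp [arr, hs.diag y a b h]
  have hzero : ∀ (y : ℤ) (d : ZMod p), (∀ a b, arr p s y a b = d) →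
      ∀ c a, iter (arr p s y) c p a = 0 := by
    intro y d h c a
    obtain ⟨k, rfl⟩ : ∃ k, p = k + 1 := ⟨p - 1, by have := hp.pos; omega⟩
    exact iter_const h c k a
  have hL : (0 : ℤ) ≤ L := Int.natCast_nonneg L
  -- Changes at level `y` use chains of `s` at level `y` or `y + 1`, both of which are close to `y`.
  let P : ℤ → ℕ → ℕ → Prop := fun y a b => Chain F ρ y q a b ∨ Chain F ρ (y + 1) q a b
  have hP : ∀ y a b, P y a b → Chain F (ρ + 1) y q a b := by
    rintro y a b (h | h)
    · exact h.mono (by simp)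
    · exact h.mono (by simp [add_comm])
  have key : ∀ y a c, a ≤ c → LinkedTo (P y) (c + 1) p a →
      Chain F (ρ + 1 + K) y (p * q) a c := by
    intro y a c hac h
    obtain ⟨c', hc', h⟩ := h.chain (hP y)
    have := h.trim hF (b := c) (by omega)
    rwa [min_eq_left hac, show min c' c = c by omega] at this
  have hA : ∀ y a b, a ≤ b → arr p s y a (b + 1) ≠ arr p s y (a + 1) (b + 1) → P y a b :=
    fun y a b h hne => Or.inl (hs.left y a b h (ne_of_arr_ne hne))
  have hB : ∀ y a b, a ≤ b → arr p s y a (b + 1) ≠ arr p s y a b → P y a b :=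
    fun y a b h hne => Or.inl (hs.right y a b h (ne_of_arr_ne hne))
  have hC : ∀ y a b, a ≤ b → arr p s y a (b + 1) ≠ arr p s (y + 1) a (b + 1) → P y a b :=
    fun y a b h hne => Or.inl (hs.level y a b h (ne_of_arr_ne hne))
  have ne_of : ∀ {u v : ZMod p}, decide (u ≠ 0) ≠ decide (v ≠ 0) → u ≠ v := by
    rintro u v h rfl
    exact h rfl
  refine ⟨?_, ?_, ?_, ?_, ?_, ?_⟩
  · intro y a c h
    simp only [corrected, iter_of_le (hd y) h, zero_add]
    by_cases hy : y < 0 <;> simp [hy]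
  · intro y a c hy
    simp only [corrected, hzero y 0 (fun a b => by simp [arr, hs.top y a b hy]), zero_add]
    simp [show ¬ y < 0 by omega]
  · intro y a c hy
    simp only [corrected, hzero y 1 (fun a b => by simp [arr, hs.bot y a b hy]), zero_add]
    simp [show y < 0 by omega]
  · intro y a c hac h
    refine key y a c hac (iter_succ_left (hd y) (hA y) p (by omega) fun h' => ne_of h ?_)
    simp only [corrected, h']
  · intro y a c hac h
    refine key y a c hac (iter_succ_right (hd y) (hB y) p fun h' => ne_of h ?_)
    simp only [corrected, h']
  · intro y a c hac h
    have h := ne_of h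
    apply key y a c hac
    by_cases hy : y = -1
    · -- Pass from level `-1` to level `0` in two steps: first change the array above the
      -- diagonal, then the diagonal value.
      subst hy
      set s' : ℕ → ℕ → ZMod p := fun a b => if a < b then arr p s 0 a b else 1 with hs'
      have hd' : ∀ a b, b ≤ a → s' a b = 1 := fun a b h => by simp [hs', not_lt.2 h]
      have hs0 : ∀ a b, a < b → s' a b = arr p s 0 a b := fun a b h => by simp [hs', h]
      have hd0 : ∀ a b, b ≤ a → arr p s 0 a b = 0 := fun a b h => by simp [hd 0 a b h]
      have hd1 : ∀ a b, b ≤ a → arr p s (-1) a b = 1 := fun a b h => by simp [hd (-1) a b h]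
      have hC' : ∀ a b, a ≤ b → arr p s (-1) a (b + 1) ≠ s' a (b + 1) → P (-1) a b := by
        intro a b hab hne
        rw [hs0 a (b + 1) (by omega)] at hne
        exact hC (-1) a b hab hne
      refine iter_congr_array (s' := s') hd1 hd' (hA (-1)) ?_ hC' p fun h' => h ?_
      · intro a b hab hne
        rcases hab.lt_or_eq with hlt | rfl
        · rw [hs0 a b hlt, hs0 a (b + 1) (by omega)] at hne
          exact Or.inr (hs.right _ a b hab (ne_of_arr_ne hne))
        · -- A jump of `s'` off the diagonal is one of level `-1` or a change between the levels.
          by_cases h1 : arr p s (-1) a (a + 1) = s' a (a + 1)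
          · refine hB (-1) a a le_rfl ?_
            rwa [h1, hd1 a a le_rfl, ← hd' a a le_rfl]
          · exact hC' a a le_rfl h1
      · simp only [corrected, h', iter_diag hd0 hd' hs0 (show a < c + 1 by omega)]
        simp
    · have hsign : (if y + 1 < 0 then (1 : ZMod p) else 0) = if y < 0 then 1 else 0 := by
        by_cases h0 : y < 0
        · rw [if_pos h0, if_pos (by omega)]
        · rw [if_neg h0, if_neg (by omega)]
      refine iter_congr_array (hd y) (s' := arr p s (y + 1)) ?_ (hA y) ?_ (hC y) p
        fun heq => h ?_
      · intro a b hab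
        rw [hd (y + 1) a b hab, hsign]
      · exact fun a b hab hne => Or.inr (hs.right _ a b hab (ne_of_arr_ne hne))
      · simp only [corrected, heq, hsign]

/-- The precision `ρ` depends on `m` and `K` only, not on the grid. -/
lemma exists_isBarrier (K : ℝ) (m : ℕ) (hm : 0 < m) :
    ∃ ρ : ℝ, ∀ (L : ℕ) (F : ℕ → ℕ → ℝ), GridFun K L F → ∃ s, IsBarrier F L m ρ s := by
  induction m using induction_on_primes with
  | zero => exact absurd hm (lt_irrefl 0)
  | one => exact ⟨K + 1, fun L F hF => ⟨_, hF.isBarrier_one⟩⟩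
  | prime_mul p q hp ih =>
    obtain ⟨ρ, h⟩ := ih (Nat.pos_of_mul_pos_left hm)
    refine ⟨ρ + 1 + K, fun L F hF => ?_⟩
    obtain ⟨s, hs⟩ := h L F hF
    exact ⟨_, hs.mul_prime hF hp⟩

lemma IsBarrier.exists_chain {m : ℕ} {s : ℤ → ℕ → ℕ → Bool} (hs : IsBarrier F L m ρ s) (n : ℕ) :
    ∃ y, Chain F ρ y m 0 n := by
  by_contra! hno
  have hconst : ∀ y, s y 0 (n + 1) = s (y + 1) 0 (n + 1) := fun y => by
    by_contra h
    exact hno y (hs.level y 0 n (Nat.zero_le n) h)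
  have hall : ∀ k : ℕ, s (-(L : ℤ) - 1 + k) 0 (n + 1) = true := by
    intro k
    induction k with
    | zero => exact hs.bot _ _ _ (by simp)
    | succ k ih => rw [← ih, hconst (-(L : ℤ) - 1 + k)]; push_cast; congr 1; ring
  have h1 := hall (2 * L + 1)
  rw [hs.top _ _ _ (by push_cast; linarith)] at h1
  exact Bool.false_ne_true h1

end Barrier

/-! ### Discretization -/

/-- The values of `f` on segments of the grid of mesh `1 / n`, multiplied by `n`; grid points
beyond `n` are moved to the end `1` of the interval. -/
noncomputable def gridValue (f : ℝ × ℝ → ℝ) (n a b : ℕ) : ℝ :=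
  if b ≤ a then 0 else n * f (min (a / n) 1, min (b / n) 1)

lemma gridValue_of_le {f : ℝ × ℝ → ℝ} (hdeg : ∀ a ∈ Icc (0 : ℝ) 1, f (a, a) = 0) {n a b : ℕ}
    (hab : a ≤ b) : gridValue f n a b = n * f (min (a / n) 1, min (b / n) 1) := by
  rcases hab.eq_or_lt with rfl | h
  · rw [gridValue, if_pos le_rfl, hdeg _ ⟨by positivity, min_le_right _ _⟩, mul_zero]
  · rw [gridValue, if_neg (by omega)]

lemma gridFun_gridValue {f : ℝ × ℝ → ℝ} {K : NNReal}
    (hf : LipschitzOnWith K f {q : ℝ × ℝ | 0 ≤ q.1 ∧ q.1 ≤ q.2 ∧ q.2 ≤ 1})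
    (hdeg : ∀ a ∈ Icc (0 : ℝ) 1, f (a, a) = 0) {n : ℕ} (hn : 0 < n) :
    GridFun K (⌈(n * K : ℝ)⌉₊) (gridValue f n) := by
  have hn' : (0 : ℝ) < n := by exact_mod_cast hn
  have hmem : ∀ a b : ℕ, a ≤ b → ((min (a / n) 1, min (b / n) 1) : ℝ × ℝ) ∈
      {q : ℝ × ℝ | 0 ≤ q.1 ∧ q.1 ≤ q.2 ∧ q.2 ≤ 1} := by
    intro a b hab
    refine ⟨by positivity, ?_, min_le_right _ _⟩
    have : (a : ℝ) ≤ b := by exact_mod_cast hab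
    exact min_le_min_right 1 (by gcongr)
  have hclip : ∀ a b : ℕ, a ≤ b + 1 → b ≤ a + 1 →
      |min ((a : ℝ) / n) 1 - min ((b : ℝ) / n) 1| ≤ 1 / n := by
    intro a b h1 h2
    refine (abs_min_sub_min_le_max _ _ _ _).trans ?_
    rw [sub_self, abs_zero, max_eq_left (abs_nonneg _), ← sub_div, abs_div, abs_of_pos hn']
    gcongr
    have h1' : (a : ℝ) ≤ b + 1 := by exact_mod_cast h1
    have h2' : (b : ℝ) ≤ a + 1 := by exact_mod_cast h2
    rw [abs_le]
    constructor <;> linarith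
  refine ⟨fun a b h => by rw [gridValue, if_pos h], ?_, ?_⟩
  · intro a b a' b' hab hab' h1 h2 h3 h4
    have h := hf.dist_le_mul _ (hmem a b hab) _ (hmem a' b' hab')
    have hle : dist ((min (a / n) 1, min (b / n) 1) : ℝ × ℝ) (min (a' / n) 1, min (b' / n) 1)
        ≤ 1 / n := by
      rw [Prod.dist_eq]
      exact max_le (hclip a a' h1 h2) (hclip b b' h3 h4)
    rw [gridValue_of_le hdeg hab, gridValue_of_le hdeg hab', ← mul_sub, abs_mul, abs_of_pos hn']
    rw [Real.dist_eq] at h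
    calc _ ≤ (n : ℝ) * ((K : ℝ) * (1 / n)) := by gcongr; exact h.trans (by gcongr)
      _ = K := by field_simp
  · intro a b
    refine le_trans ?_ (Nat.le_ceil _)
    rcases le_total b a with h | hab
    · rw [gridValue, if_pos h, abs_zero]; positivity
    · rw [gridValue_of_le hdeg hab, abs_mul, abs_of_pos hn']
      have h := hf.dist_le_mul _ (hmem a b hab) _ (hmem a a le_rfl)
      rw [hdeg _ ⟨(hmem a b hab).1, min_le_right _ _⟩, Real.dist_eq, sub_zero, Prod.dist_eq] at h
      refine mul_le_mul_of_nonneg_left (h.trans ?_) hn'.le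
      refine mul_le_of_le_one_right K.2 (max_le (by simp) ?_)
      have h0 := hmem a a le_rfl
      have h1 := hmem a b hab
      simp only [mem_ofPred_eq] at h0 h1
      rw [Real.dist_eq, abs_le]
      constructor <;> linarith [h0.1, h0.2.2, h1.2.2, h1.2.1]

theorem stmt_18 (m : ℕ) (hm : 0 < m) (f : ℝ × ℝ → ℝ) (K : NNReal)
    (hf : LipschitzOnWith K f {q : ℝ × ℝ | 0 ≤ q.1 ∧ q.1 ≤ q.2 ∧ q.2 ≤ 1})
    (hdeg : ∀ a ∈ Icc (0:ℝ) 1, f (a, a) = 0)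
    (ε : ℝ) (hε : 0 < ε) :
    ∃ x : ℕ → ℝ, x 0 = 0 ∧ x m = 1 ∧ (∀ i < m, x i ≤ x (i + 1)) ∧
      ∀ i < m, ∀ j < m, |f (x i, x (i + 1)) - f (x j, x (j + 1))| < ε := by
  obtain ⟨ρ, hρ⟩ := exists_isBarrier K m hm
  obtain ⟨n, hn⟩ := exists_nat_gt (max 0 (2 * ρ / ε))
  have hn0 : (0 : ℝ) < n := (le_max_left _ _).trans_lt hn
  have hn1 : 2 * ρ < n * ε := (div_lt_iff₀ hε).1 ((le_max_right _ _).trans_lt hn)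
  obtain ⟨s, hs⟩ := hρ _ _ (gridFun_gridValue hf hdeg (n := n) (by exact_mod_cast hn0))
  obtain ⟨y, hy⟩ := hs.exists_chain n
  obtain ⟨x, h0, hxm, hmono, hle, hF⟩ := hy.exists_seq
  have hval : ∀ i < m, gridValue f n (x i) (x (i + 1)) = n * f (x i / n, x (i + 1) / n) := by
    intro i hi
    have h1 : ∀ j ≤ m, ((x j : ℝ) / n) ≤ 1 := fun j hj =>
      (div_le_one hn0).2 (by exact_mod_cast hle j hj)
    rw [gridValue_of_le hdeg (hmono i hi), min_eq_left (h1 i hi.le), min_eq_left (h1 (i + 1) hi)]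
  refine ⟨fun i => x i / n, by simp [h0], by simp [hxm, hn0.ne'], ?_, ?_⟩
  · intro i hi
    have : (x i : ℝ) ≤ x (i + 1) := by exact_mod_cast hmono i hi
    change (x i : ℝ) / n ≤ x (i + 1) / n
    gcongr
  · intro i hi j hj
    have h1 := abs_le.1 (hF i hi)
    have h2 := abs_le.1 (hF j hj)
    rw [hval i hi] at h1
    rw [hval j hj] at h2
    rw [abs_lt]
    constructor <;> refine lt_of_mul_lt_mul_left ?_ hn0.le <;> linarith [h1.1, h1.2, h2.1, h2.2]
end
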